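/- For every integer q ≥ 1, every deterministic OBDD (with an arbitrary variable order) representing the total Boolean function REQ_q has width at least 2^q; in terms of the input length n = 2q(⌈log₂ 2q⌉+1) this width is 2^{Ω(n/log n)}. -/

import Mathlib

set_option maxHeartbeats 1000000
/-- `binVal l a = Σ_{j=1}^l a_j 2^{l-j}` (a₁ is the most significant bit). -/
def binVal (l : ℕ) (a : Fin l → Bool) : ℕ :=
  ∑ j : Fin l, if a j then 2 ^ (l - 1 - (j : ℕ)) else 0
/-- A deterministic OBDD of width `w` over `n` Boolean variables. -/
structure OBDD (n w : ℕ) where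
  ord : Equiv.Perm (Fin n)
  tr : Fin n → Fin w → Bool → Fin w
  start : Fin w
  acc : Finset (Fin w)

namespace OBDD

def final {n w : ℕ} (M : OBDD n w) (x : Fin n → Bool) : Fin w :=
  (List.finRange n).foldl (fun s i => M.tr i s (x (M.ord i))) M.start

def Accepts {n w : ℕ} (M : OBDD n w) (x : Fin n → Bool) : Prop :=
  M.final x ∈ M.acc

def Represents {n w : ℕ} (M : OBDD n w) (f : (Fin n → Bool) → Bool) : Prop :=
  ∀ x, M.Accepts x ↔ f x = true

def RepresentsPartial {n w : ℕ} (M : OBDD n w) (F : (Fin n → Bool) → Option Bool) : Prop :=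
  ∀ x b, F x = some b → (M.Accepts x ↔ b = true)

/-- The OBDD obtained by reordering: order `π`, transitions `tr' i = tr (ord⁻¹ (π i))`. -/
def reorder {n w : ℕ} (M : OBDD n w) (π : Equiv.Perm (Fin n)) : OBDD n w :=
  ⟨π, fun i => M.tr (M.ord.symm (π i)), M.start, M.acc⟩

/-- Every reordering represents the same function as `M`. -/
def Commutative {n w : ℕ} (M : OBDD n w) : Prop :=
  ∀ (π : Equiv.Perm (Fin n)) (x : Fin n → Bool),
    (M.reorder π).Accepts x ↔ M.Accepts x

end OBDD
lemma zIdx {q l : ℕ} (i : Fin q) (j : Fin l) : (i : ℕ) * l + (j : ℕ) < q * (l + 1) :=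
  calc (i : ℕ) * l + (j : ℕ) < (i : ℕ) * l + l := Nat.add_lt_add_left j.isLt _
    _ = ((i : ℕ) + 1) * l := by ring
    _ ≤ q * l := Nat.mul_le_mul i.isLt (Nat.le_refl l)
    _ ≤ q * (l + 1) := Nat.mul_le_mul (Nat.le_refl q) (Nat.le_succ l)

lemma yIdx {q l : ℕ} (i : Fin q) : q * l + (i : ℕ) < q * (l + 1) :=
  calc q * l + (i : ℕ) < q * l + q := Nat.add_lt_add_left i.isLt _
    _ = q * (l + 1) := by ring

/-- The bit `z_{i,j}` of an input to the reordered function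
(layout: `z_{1,1},…,z_{q,l}, y_1,…,y_q`). -/
def zOf (q l : ℕ) (x : Fin (q * (l + 1)) → Bool) (i : Fin q) (j : Fin l) : Bool :=
  x ⟨(i : ℕ) * l + (j : ℕ), zIdx i j⟩

/-- The value bit `y_i` of an input to the reordered function. -/
def yOf (q l : ℕ) (x : Fin (q * (l + 1)) → Bool) (i : Fin q) : Bool :=
  x ⟨q * l + (i : ℕ), yIdx i⟩

/-- `z_{1,j} ⊕ ⋯ ⊕ z_{i,j}`. -/
def xorZ (q l : ℕ) (x : Fin (q * (l + 1)) → Bool) (i : Fin q) (j : Fin l) : Bool :=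
  decide ((Finset.univ.filter (fun i' : Fin q => i' ≤ i ∧ zOf q l x i' j = true)).card % 2 = 1)

/-- `θ(i) − 1` for the plain reordering. -/
def addrOrd (q l : ℕ) (x : Fin (q * (l + 1)) → Bool) (i : Fin q) : ℕ :=
  binVal l (zOf q l x i)

/-- `θ(i) − 1` for the xor-reordering. -/
def addrXor (q l : ℕ) (x : Fin (q * (l + 1)) → Bool) (i : Fin q) : ℕ :=
  binVal l (xorZ q l x i)

/-- The partial reordered function: defined exactly when the addresses form a
permutation of `{1,…,q}`; then position `j` of `f`'s argument is `y_{θ⁻¹(j)}`. -/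
noncomputable def ordPartial (q l : ℕ) (f : (Fin q → Bool) → Bool)
    (addr : (Fin (q * (l + 1)) → Bool) → Fin q → ℕ) :
    (Fin (q * (l + 1)) → Bool) → Option Bool := fun x =>
  if h : ∃ σ : Equiv.Perm (Fin q), ∀ i, addr x i = (σ i : ℕ) then
    some (f fun j => yOf q l x (h.choose.symm j))
  else none

/-- The partial function `ord(f)`. -/
noncomputable def ordF (q : ℕ) (f : (Fin q → Bool) → Bool) :
    (Fin (q * (Nat.clog 2 q + 1)) → Bool) → Option Bool :=
  ordPartial q (Nat.clog 2 q) f (addrOrd q (Nat.clog 2 q))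

/-- The partial function `⊕ord(f)`. -/
noncomputable def xorOrdF (q : ℕ) (f : (Fin q → Bool) → Bool) :
    (Fin (q * (Nat.clog 2 q + 1)) → Bool) → Option Bool :=
  ordPartial q (Nat.clog 2 q) f (addrXor q (Nat.clog 2 q))
/-- `Adr(i)` for an input of `REQ_q`. -/
def reqAdr (q : ℕ) (x : Fin (2 * q * (Nat.clog 2 (2 * q) + 1)) → Bool) (i : Fin (2 * q)) : ℕ :=
  addrXor (2 * q) (Nat.clog 2 (2 * q)) x i

def reqU (q : ℕ) (x : Fin (2 * q * (Nat.clog 2 (2 * q) + 1)) → Bool) : ℕ :=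
  (∑ i : Fin (2 * q),
      if reqAdr q x i < q then
        2 ^ reqAdr q x i * (if yOf (2 * q) (Nat.clog 2 (2 * q)) x i then 1 else 0)
      else 0) % 2 ^ q

def reqV (q : ℕ) (x : Fin (2 * q * (Nat.clog 2 (2 * q) + 1)) → Bool) : ℕ :=
  (∑ i : Fin (2 * q),
      if q ≤ reqAdr q x i then
        2 ^ (reqAdr q x i - q) * (if yOf (2 * q) (Nat.clog 2 (2 * q)) x i then 1 else 0)
      else 0) % 2 ^ q

/-- The (total) xor-reordered equality function `REQ_q`. -/
def REQ (q : ℕ) (x : Fin (2 * q * (Nat.clog 2 (2 * q) + 1)) → Bool) : Bool :=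
  decide (reqU q x = reqV q x)

/-!
Fix the address bits `z` so that `Adr` is a permutation `σ`. Every permutation arises this way,
because prefix xors can be prescribed by choosing the `z_i` as consecutive differences. What is left
is a function of `y` alone: the equality function applied to the rearrangement `y ∘ σ⁻¹`. Given an
OBDD, take for `σ` the permutation that ranks the `y_i` by their reading time: the OBDD then reads
the arguments of the equality function in their natural order, one half after the other, and must
remember the whole first half, for which there are `2^q` possibilities.
-/

open Finset

section Subfunctions

variable {ι κ α β γ : Type*} [DecidableEq ι] [DecidableEq κ]

/-- The number of distinct subfunctions that `f` induces when the variables in `S` are fixed; it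
bounds below the width of every OBDD that reads `S` first. The subfunctions are kept as functions of
all variables, which ignore those in `S`. -/
noncomputable def numSubfunctions (f : (ι → α) → β) (S : Finset ι) : ℕ :=
  (Set.range fun x r => f (S.piecewise x r)).ncard

theorem card_le_numSubfunctions [Finite ι] [Finite α] {f : (ι → α) → β} {S : Finset ι}
    {p : γ → ι → α} (hp : Function.Injective fun c r => f (S.piecewise (p c) r)) :
    Nat.card γ ≤ numSubfunctions f S := by
  rw [← Set.ncard_univ, ← Set.ncard_image_of_injective _ hp, Set.image_univ]
  exact Set.ncard_le_ncard (Set.range_comp_subset_range p fun x r => f (S.piecewise x r))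
    (Set.finite_range _)

theorem numSubfunctions_comp_le [Finite κ] [Finite α] (F : (κ → α) → β) {φ : (ι → α) → κ → α}
    {S : Finset ι} {T : Finset κ}
    (hφ : ∀ x r, φ (S.piecewise x r) = T.piecewise (φ x) (φ r)) :
    numSubfunctions (F ∘ φ) S ≤ numSubfunctions F T := by
  have hsub : (Set.range fun x r => (F ∘ φ) (S.piecewise x r)) ⊆
      (· ∘ φ) '' Set.range fun x r => F (T.piecewise x r) := by
    rintro _ ⟨x, rfl⟩
    exact ⟨_, ⟨φ x, rfl⟩, funext fun r => congrArg F (hφ x r).symm⟩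
  exact (Set.ncard_le_ncard hsub (Set.toFinite _)).trans (Set.ncard_image_le (Set.toFinite _))

end Subfunctions

namespace OBDD

variable {n w : ℕ}

/-- The Boolean function that `M` computes. -/
def eval (M : OBDD n w) (x : Fin n → Bool) : Bool :=
  decide (M.final x ∈ M.acc)

/-- The state reached from `s` by processing the levels in `L` on input `x`. -/
def run (M : OBDD n w) (x : Fin n → Bool) (L : List (Fin n)) (s : Fin w) : Fin w :=
  L.foldl (fun s i => M.tr i s (x (M.ord i))) s

/-- The variables that `M` tests on its first `k` levels. -/
def readBefore (M : OBDD n w) (k : ℕ) : Finset (Fin n) :=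
  univ.filter fun v => (M.ord.symm v : ℕ) < k

theorem eval_eq_true_iff (M : OBDD n w) (x : Fin n → Bool) : M.eval x = true ↔ M.Accepts x :=
  decide_eq_true_iff

theorem ord_mem_readBefore {M : OBDD n w} {k : ℕ} {i : Fin n} :
    M.ord i ∈ M.readBefore k ↔ (i : ℕ) < k := by
  simp [readBefore]

theorem run_congr (M : OBDD n w) {x y : Fin n → Bool} {L : List (Fin n)}
    (h : ∀ i ∈ L, x (M.ord i) = y (M.ord i)) (s : Fin w) : M.run x L s = M.run y L s :=
  List.foldl_ext _ _ _ fun s i hi => by rw [h i hi]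

theorem final_piecewise_readBefore (M : OBDD n w) (k : ℕ) (x r : Fin n → Bool) :
    M.final ((M.readBefore k).piecewise x r) =
      M.run r ((List.finRange n).drop k) (M.run x ((List.finRange n).take k) M.start) := by
  have hsplit (v : Fin n → Bool) : M.final v =
      M.run v ((List.finRange n).drop k) (M.run v ((List.finRange n).take k) M.start) := by
    rw [run, run, ← List.foldl_append, List.take_append_drop, final]
  rw [hsplit, M.run_congr (L := (List.finRange n).take k) (y := x) fun i hi => ?_,
    M.run_congr (L := (List.finRange n).drop k) (y := r) fun i hi => ?_]
  · obtain ⟨j, hj, rfl⟩ := List.mem_drop_iff_getElem.1 hi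
    exact piecewise_eq_of_notMem _ _ _ (by simp [ord_mem_readBefore])
  · obtain ⟨j, hj, rfl⟩ := List.mem_take_iff_getElem.1 hi
    exact piecewise_eq_of_mem _ _ _ (by
      simpa [ord_mem_readBefore] using hj.trans_le (min_le_left _ _))

theorem numSubfunctions_eval_le_width (M : OBDD n w) (k : ℕ) :
    numSubfunctions M.eval (M.readBefore k) ≤ w := by
  let resume (s : Fin w) (r : Fin n → Bool) : Bool :=
    decide (M.run r ((List.finRange n).drop k) s ∈ M.acc)
  have hsub : (Set.range fun x r => M.eval ((M.readBefore k).piecewise x r)) ⊆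
      resume '' Set.univ := by
    rintro _ ⟨x, rfl⟩
    exact ⟨M.run x ((List.finRange n).take k) M.start, trivial, funext fun r => by
      simp only [resume, eval, final_piecewise_readBefore]⟩
  calc numSubfunctions M.eval (M.readBefore k)
      ≤ (resume '' Set.univ).ncard := Set.ncard_le_ncard hsub (Set.toFinite _)
    _ ≤ (Set.univ : Set (Fin w)).ncard := Set.ncard_image_le (Set.toFinite _)
    _ = w := by simp

theorem Represents.representsPartial {M : OBDD n w} {f : (Fin n → Bool) → Bool}
    (h : M.Represents f) {F : (Fin n → Bool) → Option Bool}
    (hF : ∀ x b, F x = some b → f x = b) : M.RepresentsPartial F :=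
  fun x b hb => by rw [h x, hF x b hb]

end OBDD

section Binary

theorem ofBits_eq_sum {l : ℕ} (a : Fin l → Bool) :
    Nat.ofBits a = ∑ j : Fin l, 2 ^ (j : ℕ) * (if a j then 1 else 0) := by
  induction l with
  | zero => simp
  | succ l ih =>
    rw [Nat.ofBits_succ, ih, Fin.sum_univ_succ, add_comm, mul_sum]
    congr 1
    · cases a 0 <;> simp
    · simp [pow_succ']

theorem ofBits_injective {l : ℕ} : Function.Injective (Nat.ofBits : (Fin l → Bool) → ℕ) :=
  fun a b h => funext fun j => by
    rw [← Nat.testBit_ofBits_lt a j j.2, h, Nat.testBit_ofBits_lt b j j.2]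

theorem binVal_eq_ofBits {l : ℕ} (a : Fin l → Bool) : binVal l a = Nat.ofBits (a ∘ Fin.rev) := by
  rw [ofBits_eq_sum, binVal, ← Equiv.sum_comp Fin.revPerm]
  refine sum_congr rfl fun j _ => ?_
  have hrev : l - 1 - (j.rev : ℕ) = j := by
    rw [Fin.val_rev]
    omega
  simp only [Fin.revPerm_apply, Function.comp_apply, hrev, mul_ite, mul_one, mul_zero]

theorem exists_binVal_eq {l k : ℕ} (hk : k < 2 ^ l) : ∃ a, binVal l a = k := by
  refine ⟨fun j => k.testBit j.rev, ?_⟩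
  simp only [binVal_eq_ofBits, Function.comp_def, Fin.rev_rev, Nat.ofBits_testBit,
    Nat.mod_eq_of_lt hk]

end Binary

section Reordering

variable {m l : ℕ}

/-- The position of each variable in an input of a reordered function: `inl (i, j)` stands for
`z_{i,j}` and `inr i` for `y_i`. -/
def layout (m l : ℕ) : Fin m × Fin l ⊕ Fin m ≃ Fin (m * (l + 1)) :=
  (finProdFinEquiv.sumCongr (Equiv.refl _)).trans
    (finSumFinEquiv.trans (finCongr (mul_add_one m l).symm))

theorem layout_inl (i : Fin m) (j : Fin l) :
    layout m l (.inl (i, j)) = ⟨i * l + j, zIdx i j⟩ :=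
  Fin.ext (show (j : ℕ) + l * i = i * l + j by ring)

theorem layout_inr (i : Fin m) : layout m l (.inr i) = ⟨m * l + i, yIdx i⟩ :=
  rfl

/-- The input of a reordered function with address bits `Z` and value bits `Y`. -/
def mkInput (Z : Fin m → Fin l → Bool) (Y : Fin m → Bool) : Fin (m * (l + 1)) → Bool :=
  Sum.elim (fun p => Z p.1 p.2) Y ∘ (layout m l).symm

theorem mkInput_layout (Z : Fin m → Fin l → Bool) (Y : Fin m → Bool) (v : Fin m × Fin l ⊕ Fin m) :
    mkInput Z Y (layout m l v) = Sum.elim (fun p => Z p.1 p.2) Y v := by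
  simp [mkInput]

theorem zOf_mkInput (Z : Fin m → Fin l → Bool) (Y : Fin m → Bool) :
    zOf m l (mkInput Z Y) = Z := by
  funext i j
  rw [zOf, ← layout_inl, mkInput_layout, Sum.elim_inl]

theorem yOf_mkInput (Z : Fin m → Fin l → Bool) (Y : Fin m → Bool) :
    yOf m l (mkInput Z Y) = Y := by
  funext i
  rw [yOf, ← layout_inr, mkInput_layout, Sum.elim_inr]

-- In `ZMod 2` the cardinality is the telescoping sum of the differences of `c`.
theorem odd_card_filter_ne_iff (c : Fin (m + 1) → Bool) (i : Fin m) :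
    Odd #{k : Fin m | k ≤ i ∧ c k.castSucc ≠ c k.succ} ↔ c 0 ≠ c i.succ := by
  let d (k : Fin (m + 1)) : ZMod 2 := (c k).toNat
  have hstep (k : Fin m) :
      (if c k.castSucc ≠ c k.succ then 1 else 0) = d k.succ - d k.castSucc := by
    simp only [d]
    cases c k.castSucc <;> cases c k.succ <;> decide
  have hcard : (#{k : Fin m | k ≤ i ∧ c k.castSucc ≠ c k.succ} : ZMod 2) = d i.succ - d 0 := by
    rw [← Fin.sum_Iic_sub, ← sum_congr rfl fun k _ => hstep k, sum_boole, ← filter_filter,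
      filter_ge_eq_Iic]
  rw [← ZMod.natCast_eq_one_iff_odd, hcard]
  simp only [d]
  cases c 0 <;> cases c i.succ <;> decide

theorem exists_xorZ_mkInput_eq (B : Fin m → Fin l → Bool) :
    ∃ Z, ∀ Y, xorZ m l (mkInput Z Y) = B := by
  let C : Fin (m + 1) → Fin l → Bool := Fin.cons (fun _ => false) B
  refine ⟨fun i j => C i.castSucc j ^^ C i.succ j, fun Y => ?_⟩
  funext i j
  have hodd := odd_card_filter_ne_iff (fun k => C k j) i
  simp only [xorZ, zOf_mkInput, bne_iff_ne, ← Nat.odd_iff, hodd]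
  simp [C]

theorem exists_addrXor_mkInput_eq (A : Fin m → ℕ) (hA : ∀ i, A i < 2 ^ l) :
    ∃ Z, ∀ Y, addrXor m l (mkInput Z Y) = A := by
  choose B hB using fun i => exists_binVal_eq (hA i)
  obtain ⟨Z, hZ⟩ := exists_xorZ_mkInput_eq B
  exact ⟨Z, fun Y => funext fun i => by rw [addrXor, hZ, hB]⟩

theorem ordPartial_eq_some_iff {f : (Fin m → Bool) → Bool}
    {addr : (Fin (m * (l + 1)) → Bool) → Fin m → ℕ} {x : Fin (m * (l + 1)) → Bool} {b : Bool} :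
    ordPartial m l f addr x = some b ↔
      ∃ σ : Equiv.Perm (Fin m), (∀ i, addr x i = σ i) ∧ f (yOf m l x ∘ σ.symm) = b := by
  unfold ordPartial
  split_ifs with h
  · have huniq (σ : Equiv.Perm (Fin m)) (hσ : ∀ i, addr x i = σ i) : σ = h.choose :=
      Equiv.ext fun i => Fin.ext ((hσ i).symm.trans (h.choose_spec i))
    rw [Option.some_inj]
    constructor
    · exact fun hb => ⟨h.choose, h.choose_spec, hb⟩
    · rintro ⟨σ, hσ, hb⟩
      rwa [huniq σ hσ] at hb
  · simp only [false_iff]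
    exact fun ⟨σ, hσ, _⟩ => h ⟨σ, hσ⟩

theorem exists_perm_lt_iff_lt {α : Type*} [LinearOrder α] {g : Fin m → α}
    (hg : Function.Injective g) : ∃ σ : Equiv.Perm (Fin m), ∀ i j, σ i < σ j ↔ g i < g j := by
  have hmono : StrictMono (g ∘ Tuple.sort g) :=
    (Tuple.monotone_sort g).strictMono_of_injective (hg.comp (Tuple.sort g).injective)
  refine ⟨(Tuple.sort g).symm, fun i j => ?_⟩
  rw [← hmono.lt_iff_lt]
  simp

theorem numSubfunctions_Iio_le_width {w : ℕ} {f : (Fin m → Bool) → Bool}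
    {M : OBDD (m * (l + 1)) w} (hl : m ≤ 2 ^ l)
    (hM : M.RepresentsPartial (ordPartial m l f (addrXor m l))) (t : Fin m) :
    numSubfunctions f (Iio t) ≤ w := by
  let time (i : Fin m) : Fin (m * (l + 1)) := M.ord.symm (layout m l (.inr i))
  have htime : Function.Injective time :=
    M.ord.symm.injective.comp ((layout m l).injective.comp Sum.inr_injective)
  obtain ⟨σ, hσ⟩ := exists_perm_lt_iff_lt htime
  obtain ⟨Z, hZ⟩ := exists_addrXor_mkInput_eq (l := l) (fun i => (σ i : ℕ))
    fun i => (σ i).2.trans_le hl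
  let φ (y : Fin m → Bool) : Fin (m * (l + 1)) → Bool := mkInput Z (y ∘ σ)
  have hf : f = M.eval ∘ φ := by
    funext y
    have hsome : ordPartial m l f (addrXor m l) (φ y) = some (f y) :=
      ordPartial_eq_some_iff.2 ⟨σ, congrFun (hZ _), by
        rw [yOf_mkInput, Function.comp_assoc, σ.self_comp_symm, Function.comp_id]⟩
    exact Bool.eq_iff_iff.2 ((hM _ _ hsome).symm.trans (M.eval_eq_true_iff _).symm)
  have hcut (i : Fin m) : layout m l (.inr i) ∈ M.readBefore (time (σ.symm t)) ↔ σ i < t := by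
    rw [← M.ord.apply_symm_apply (layout m l (.inr i)), OBDD.ord_mem_readBefore, ← Fin.lt_def,
      ← hσ, σ.apply_symm_apply]
  have hφ (x r : Fin m → Bool) : φ ((Iio t).piecewise x r) =
      (M.readBefore (time (σ.symm t))).piecewise (φ x) (φ r) := by
    rw [← (layout m l).surjective.injective_comp_right.eq_iff]
    funext v
    rcases v with p | i
    · simp [φ, mkInput_layout, Finset.piecewise]
    · simp [φ, mkInput_layout, Finset.piecewise, hcut]
  rw [hf]
  exact (numSubfunctions_comp_le M.eval hφ).trans (M.numSubfunctions_eval_le_width _)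

end Reordering

section Equality

variable {q : ℕ}

/-- The lower (`h = 0`) or upper (`h = 1`) half of a word of length `2q`. -/
def half (h : Fin 2) (y : Fin (2 * q) → Bool) (j : Fin q) : Bool :=
  y (finProdFinEquiv (h, j))

/-- The equality function `EQ_q` of the two halves of a word of length `2q`. -/
def halvesEq (q : ℕ) (y : Fin (2 * q) → Bool) : Bool :=
  decide (half 0 y = half 1 y)

theorem two_pow_le_numSubfunctions_halvesEq (hq : q < 2 * q) :
    2 ^ q ≤ numSubfunctions (halvesEq q) (Iio ⟨q, hq⟩) := by
  let double (a : Fin q → Bool) (i : Fin (2 * q)) : Bool := a i.modNat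
  have heval (a b : Fin q → Bool) :
      halvesEq q ((Iio ⟨q, hq⟩).piecewise (double a) (double b)) = decide (a = b) := by
    have hlow : half 0 ((Iio ⟨q, hq⟩).piecewise (double a) (double b)) = a := by
      funext j
      simp [half, double, Finset.piecewise, Fin.lt_def, Fin.modNat, Nat.mod_eq_of_lt]
    have hhigh : half 1 ((Iio ⟨q, hq⟩).piecewise (double a) (double b)) = b := by
      funext j
      simp [half, double, Finset.piecewise, Fin.lt_def, Fin.modNat, Nat.mod_eq_of_lt]
    rw [halvesEq, hlow, hhigh]
  have hinj : Function.Injective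
      fun a r => halvesEq q ((Iio ⟨q, hq⟩).piecewise (double a) r) := by
    intro a b hab
    simpa [heval] using congrFun hab (double b)
  simpa using card_le_numSubfunctions hinj

variable {x : Fin (2 * q * (Nat.clog 2 (2 * q) + 1)) → Bool} {σ : Equiv.Perm (Fin (2 * q))}

theorem reqU_eq_ofBits (hσ : ∀ i, reqAdr q x i = σ i) :
    reqU q x = Nat.ofBits (half 0 (yOf (2 * q) (Nat.clog 2 (2 * q)) x ∘ σ.symm)) := by
  rw [reqU, ← Nat.mod_eq_of_lt (Nat.ofBits_lt_two_pow (half 0 _)), ofBits_eq_sum,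
    ← Equiv.sum_comp σ.symm, ← finProdFinEquiv.sum_comp, Fintype.sum_prod_type]
  unfold half
  simp [hσ]

theorem reqV_eq_ofBits (hσ : ∀ i, reqAdr q x i = σ i) :
    reqV q x = Nat.ofBits (half 1 (yOf (2 * q) (Nat.clog 2 (2 * q)) x ∘ σ.symm)) := by
  rw [reqV, ← Nat.mod_eq_of_lt (Nat.ofBits_lt_two_pow (half 1 _)), ofBits_eq_sum,
    ← Equiv.sum_comp σ.symm, ← finProdFinEquiv.sum_comp, Fintype.sum_prod_type]
  unfold half
  simp [hσ, fun j : Fin q => j.2.not_ge]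

theorem REQ_eq_of_xorOrdF_eq_some {b : Bool} (hx : xorOrdF (2 * q) (halvesEq q) x = some b) :
    REQ q x = b := by
  obtain ⟨σ, hσ, rfl⟩ := ordPartial_eq_some_iff.1 hx
  simp only [REQ, halvesEq, reqU_eq_ofBits hσ, reqV_eq_ofBits hσ, ofBits_injective.eq_iff]

end Equality

/-- every deterministic OBDD representing `REQ_q` has width `≥ 2^q`. -/
theorem stmt9 (q : ℕ) (hq : 1 ≤ q) (w : ℕ)
    (M : OBDD (2 * q * (Nat.clog 2 (2 * q) + 1)) w)
    (h : M.Represents (REQ q)) : 2 ^ q ≤ w := by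
  have hq' : q < 2 * q := by omega
  have hM : M.RepresentsPartial (xorOrdF (2 * q) (halvesEq q)) :=
    h.representsPartial fun _ _ => REQ_eq_of_xorOrdF_eq_some
  exact (two_pow_le_numSubfunctions_halvesEq hq').trans
    (numSubfunctions_Iio_le_width (Nat.le_pow_clog one_lt_two _) hM _)
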